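/- arXiv:1303.5047 — 2 statements merged into one kernel-verified Lean document; each statement's English description precedes it below -/
import Mathlib

section
/- Assume B is bounded below on the closure of R(D) and that X = N(D) ⊕ closure(R(BD)) as a topological direct sum. Then X = N(DB) ⊕ closure(R(D)) as a topological direct sum, where N(DB) = {u ∈ X : Bu ∈ N(D)}. -/
noncomputable section

variable {X : Type*} [NormedAddCommGroup X] [NormedSpace ℂ X]

/-- A complex normed space is reflexive if the canonical inclusion into its double dual is
surjective. -/
def ReflexiveSpace (X : Type*) [NormedAddCommGroup X] [NormedSpace ℂ X] : Prop :=
  Function.Surjective (NormedSpace.inclusionInDoubleDual ℂ X)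

/-- The open bisector `S_ω = {z ≠ 0 : |arg z| < ω or |arg (-z)| < ω}`. -/
def Sector (ω : ℝ) : Set ℂ :=
  {z | z ≠ 0 ∧ (|Complex.arg z| < ω ∨ |Complex.arg (-z)| < ω)}

/-- The kernel of a partially defined operator, viewed as a subspace of the ambient space. -/
def pker (A : X →ₗ.[ℂ] X) : Submodule ℂ X :=
  (LinearMap.ker A.toFun).map A.domain.subtype

/-- The range of a partially defined operator. -/
def pran (A : X →ₗ.[ℂ] X) : Submodule ℂ X :=
  LinearMap.range A.toFun

/-- `X = N ⊕ M` as a topological direct sum: `N` and `M` are closed complementary subspaces. -/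
def IsTopDirectSum (N M : Submodule ℂ X) : Prop :=
  IsClosed (N : Set X) ∧ IsClosed (M : Set X) ∧ N ⊓ M = ⊥ ∧ N ⊔ M = ⊤

/-- `A` kernel/range decomposes: `X = N(A) ⊕ closure (R(A))` as a topological direct sum. -/
def KerRanDecomp (A : X →ₗ.[ℂ] X) : Prop :=
  IsTopDirectSum (pker A) (pran A).topologicalClosure

/-- A closed operator `A` is bisectorial of angle `ω` if for every `ω' ∈ (ω, π/2)` there is
`C > 0` such that for every `λ ∉ S_{ω'}` the map `I + λA : D(A) → X` is a bijection whose
inverse is bounded with norm at most `C`. -/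
def IsBisectorial (A : X →ₗ.[ℂ] X) (ω : ℝ) : Prop :=
  A.IsClosed ∧
    ∀ ω' ∈ Set.Ioo ω (Real.pi / 2), ∃ C > 0, ∀ lam : ℂ, lam ∉ Sector ω' →
      Function.Bijective (fun u : A.domain => (u : X) + lam • A u) ∧
        ∀ u : A.domain, ‖(u : X)‖ ≤ C * ‖(u : X) + lam • A u‖

/-- The operator `BD`, with domain `D(D)`, acting by `u ↦ B (D u)`. -/
def opBD (B : X →L[ℂ] X) (D : X →ₗ.[ℂ] X) : X →ₗ.[ℂ] X :=
  ⟨D.domain, (B : X →ₗ[ℂ] X).comp D.toFun⟩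

/-- The operator `DB`, with domain `{u : B u ∈ D(D)}`, acting by `u ↦ D (B u)`. -/
def opDB (B : X →L[ℂ] X) (D : X →ₗ.[ℂ] X) : X →ₗ.[ℂ] X :=
  ⟨D.domain.comap (B : X →ₗ[ℂ] X),
    D.toFun.comp ((B : X →ₗ[ℂ] X).restrict fun _ hx => hx)⟩

/-- `B` is bounded below on the set `S`. -/
def BoundedBelowOn (B : X →L[ℂ] X) (S : Set X) : Prop :=
  ∃ c > 0, ∀ u ∈ S, c * ‖u‖ ≤ ‖B u‖

/-!
Put `M = closure (R(D))`. Since `R(BD) = B(R(D))` and `B` is bounded below on the complete space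
`M`, the image `B(M)` is closed and hence equals `closure (R(BD))`. The hypothesis is therefore an
algebraic decomposition `X = N(D) ⊕ B(M)` with `B` injective on `M`, and such a decomposition pulls
back along `B` to `X = B⁻¹(N(D)) ⊕ M`, where `B⁻¹(N(D)) = N(DB)`.
-/

theorem isCompl_comap_of_isCompl_map {R E F : Type*} [Ring R] [AddCommGroup E] [Module R E]
    [AddCommGroup F] [Module R F] {f : E →ₗ[R] F} {N : Submodule R F} {M : Submodule R E}
    (hf : Set.InjOn f M) (h : IsCompl N (M.map f)) : IsCompl (N.comap f) M := by
  constructor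
  · refine Submodule.disjoint_def.2 fun u hfu hu => ?_
    have hfu_zero : f u = 0 :=
      Submodule.disjoint_def.1 h.disjoint (f u) hfu (Submodule.mem_map_of_mem hu)
    exact hf hu M.zero_mem (hfu_zero.trans (map_zero f).symm)
  · refine Submodule.codisjoint_iff_exists_add_eq.2 fun x => ?_
    obtain ⟨n, _, hn, ⟨m, hm, rfl⟩, hsum⟩ :=
      Submodule.codisjoint_iff_exists_add_eq.1 h.codisjoint (f x)
    have hfsub : f (x - m) = n := by rw [map_sub, ← hsum, add_sub_cancel_right]
    exact ⟨x - m, m, by rwa [Submodule.mem_comap, hfsub], hm, sub_add_cancel x m⟩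

theorem map_topologicalClosure_of_isClosed_image {R E F : Type*} [Semiring R]
    [TopologicalSpace E] [AddCommMonoid E] [Module R E] [ContinuousAdd E] [ContinuousConstSMul R E]
    [TopologicalSpace F] [AddCommMonoid F] [Module R F] [ContinuousAdd F] [ContinuousConstSMul R F]
    {f : E →L[R] F} {M : Submodule R E}
    (h : IsClosed (f '' (M.topologicalClosure : Set E))) :
    M.topologicalClosure.map (f : E →ₗ[R] F) = (M.map (f : E →ₗ[R] F)).topologicalClosure :=
  SetLike.coe_injective <|
    (image_closure_subset_closure_image f.continuous).antisymm <|
      closure_minimal (Set.image_mono subset_closure) h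

theorem isTopDirectSum_iff {N M : Submodule ℂ X} :
    IsTopDirectSum N M ↔ IsClosed (N : Set X) ∧ IsClosed (M : Set X) ∧ IsCompl N M := by
  rw [IsTopDirectSum, isCompl_iff, disjoint_iff, codisjoint_iff]

namespace BoundedBelowOn

variable {B : X →L[ℂ] X} {M : Submodule ℂ X}

theorem exists_antilipschitzWith (h : BoundedBelowOn B M) :
    ∃ K, AntilipschitzWith K (B.domRestrict M) := by
  obtain ⟨c, hc, hbound⟩ := h
  exact antilipschitzWith_iff_exists_mul_le_norm.2 ⟨c, hc, fun u => hbound u u.2⟩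

theorem injOn (h : BoundedBelowOn B M) : Set.InjOn B M := by
  obtain ⟨K, hK⟩ := h.exists_antilipschitzWith
  exact Set.injOn_iff_injective.2 hK.injective

theorem isClosed_image [CompleteSpace M] (h : BoundedBelowOn B M) :
    IsClosed (B '' (M : Set X)) := by
  obtain ⟨K, hK⟩ := h.exists_antilipschitzWith
  rw [← Set.range_domRestrict]
  exact hK.isClosed_range (B.domRestrict M).uniformContinuous

end BoundedBelowOn

theorem pran_opBD (B : X →L[ℂ] X) (D : X →ₗ.[ℂ] X) :
    pran (opBD B D) = (pran D).map (B : X →ₗ[ℂ] X) :=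
  LinearMap.range_comp D.toFun (B : X →ₗ[ℂ] X)

theorem mem_pker {A : X →ₗ.[ℂ] X} {u : X} : u ∈ pker A ↔ ∃ h : u ∈ A.domain, A ⟨u, h⟩ = 0 := by
  simp [pker]

theorem pker_opDB (B : X →L[ℂ] X) (D : X →ₗ.[ℂ] X) :
    pker (opDB B D) = (pker D).comap (B : X →ₗ[ℂ] X) := by
  ext u
  rw [Submodule.mem_comap, mem_pker, mem_pker]
  rfl

theorem stmt_6_general (D : X →ₗ.[ℂ] X) (B : X →L[ℂ] X)
    [CompleteSpace (pran D).topologicalClosure]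
    (hlow : BoundedBelowOn B ((pran D).topologicalClosure : Set X))
    (hsplit : IsTopDirectSum (pker D) (pran (opBD B D)).topologicalClosure) :
    pker (opDB B D) = (pker D).comap (B : X →ₗ[ℂ] X) ∧
    IsTopDirectSum (pker (opDB B D)) (pran D).topologicalClosure := by
  refine ⟨pker_opDB B D, ?_⟩
  obtain ⟨hker_closed, -, hcompl⟩ := isTopDirectSum_iff.1 hsplit
  rw [pran_opBD, ← map_topologicalClosure_of_isClosed_image hlow.isClosed_image] at hcompl
  rw [pker_opDB]
  exact isTopDirectSum_iff.2 ⟨hker_closed.preimage B.continuous,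
    Submodule.isClosed_topologicalClosure _, isCompl_comap_of_isCompl_map hlow.injOn hcompl⟩

/-- If `B` is bounded below on the closure of `R(D)` and
`X = N(D) ⊕ closure (R(BD))` as a topological direct sum, then
`X = N(DB) ⊕ closure (R(D))` as a topological direct sum, where
`N(DB) = {u : B u ∈ N(D)}`. -/
theorem stmt_6 {X : Type*} [NormedAddCommGroup X] [NormedSpace ℂ X] [CompleteSpace X]
    (hrefl : ReflexiveSpace X) (D : X →ₗ.[ℂ] X) (hD : D.IsClosed)
    (hdense : Dense (D.domain : Set X)) (B : X →L[ℂ] X)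
    (hlow : BoundedBelowOn B ((pran D).topologicalClosure : Set X))
    (hsplit : IsTopDirectSum (pker D) (pran (opBD B D)).topologicalClosure) :
    pker (opDB B D) = (pker D).comap (B : X →ₗ[ℂ] X) ∧
    IsTopDirectSum (pker (opDB B D)) (pran D).topologicalClosure :=
  stmt_6_general D B hlow hsplit
end
end

section
/- Assume B is bounded below on the closure of R(D) and that X = N(D) ⊕ closure(R(BD)) as a topological direct sum. Then R(DB) = R(D), i.e. {D(Bu) : u ∈ X, Bu ∈ D(D)} = {Du : u ∈ D(D)}. -/
noncomputable section

variable {X : Type*} [NormedAddCommGroup X] [NormedSpace ℂ X]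

/-!
Since `B` is bounded below on the closure of `R(D)`, it maps that closure onto the closure of
`B (R(D)) = R(BD)`. The splitting therefore writes every `u ∈ D(D)` as `n + B v` with `D n = 0`,
whence `B v = u - n ∈ D(D)` and `D (B v) = D u`.
-/

section Antilipschitz

variable {𝕜 E F : Type*} [NormedField 𝕜] [SeminormedAddCommGroup E] [NormedSpace 𝕜 E]
  [NormedAddCommGroup F] [NormedSpace 𝕜 F] {f : E →L[𝕜] F} {K : NNReal}

theorem isClosed_map_of_antilipschitzWith_domRestrict {S : Submodule 𝕜 E} [CompleteSpace S]
    (hf : AntilipschitzWith K (f.domRestrict S)) :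
    IsClosed (S.map (f : E →ₗ[𝕜] F) : Set F) := by
  have hrange : Set.range (f.domRestrict S) = (S.map (f : E →ₗ[𝕜] F) : Set F) := by
    ext y
    simp
  exact hrange ▸ hf.isClosed_range (f.domRestrict S).uniformContinuous

theorem topologicalClosure_map_eq_of_antilipschitzWith_domRestrict {S : Submodule 𝕜 E}
    [CompleteSpace S.topologicalClosure]
    (hf : AntilipschitzWith K (f.domRestrict S.topologicalClosure)) :
    (S.map (f : E →ₗ[𝕜] F)).topologicalClosure =
      S.topologicalClosure.map (f : E →ₗ[𝕜] F) :=
  le_antisymm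
    (Submodule.topologicalClosure_minimal _ (Submodule.map_mono S.le_topologicalClosure)
      (isClosed_map_of_antilipschitzWith_domRestrict hf))
    (S.topologicalClosure_map f)

end Antilipschitz

theorem BoundedBelowOn.exists_antilipschitzWith_domRestrict {B : X →L[ℂ] X}
    {S : Submodule ℂ X} (hB : BoundedBelowOn B S) :
    ∃ K, AntilipschitzWith K (B.domRestrict S) := by
  obtain ⟨c, hc, hbound⟩ := hB
  refine ⟨⟨c⁻¹, (inv_pos.2 hc).le⟩, (B.domRestrict S).antilipschitz_of_bound fun x ↦ ?_⟩
  exact (le_inv_mul_iff₀ hc).2 (hbound x x.2)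

theorem mem_pker_iff {A : X →ₗ.[ℂ] X} {x : X} :
    x ∈ pker A ↔ ∃ hx : x ∈ A.domain, A ⟨x, hx⟩ = 0 := by
  simp [pker]

theorem pran_opDB_le (B : X →L[ℂ] X) (D : X →ₗ.[ℂ] X) : pran (opDB B D) ≤ pran D :=
  LinearMap.range_comp_le_range _ _

theorem pran_le_pran_opDB_iff {B : X →L[ℂ] X} {D : X →ₗ.[ℂ] X} :
    pran D ≤ pran (opDB B D) ↔ D.domain ≤ pker D ⊔ (B : X →ₗ[ℂ] X).range := by
  constructor
  · intro hran u hu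
    obtain ⟨⟨v, hBv⟩, hDBv : D ⟨B v, hBv⟩ = D ⟨u, hu⟩⟩ := hran ⟨⟨u, hu⟩, rfl⟩
    have hker : u - B v ∈ pker D :=
      mem_pker_iff.2 ⟨sub_mem hu hBv, (D.map_sub ⟨u, hu⟩ ⟨B v, hBv⟩).trans (by rw [hDBv, sub_self])⟩
    exact Submodule.mem_sup.2 ⟨_, hker, _, ⟨v, rfl⟩, sub_add_cancel _ _⟩
  · rintro hdom _ ⟨⟨u, hu⟩, rfl⟩
    obtain ⟨n, hn, _, ⟨v, rfl⟩, hnv : n + B v = u⟩ := Submodule.mem_sup.1 (hdom hu)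
    obtain ⟨hn_dom, hDn⟩ := mem_pker_iff.1 hn
    have hBv : B v ∈ D.domain := (add_mem_cancel_left hn_dom).1 (hnv ▸ hu)
    refine ⟨⟨v, hBv⟩, ?_⟩
    calc D ⟨B v, hBv⟩ = D ⟨n, hn_dom⟩ + D ⟨B v, hBv⟩ := by rw [hDn, zero_add]
      _ = D (⟨n, hn_dom⟩ + ⟨B v, hBv⟩) := (D.map_add _ _).symm
      _ = D ⟨u, hu⟩ := congrArg D (Subtype.ext hnv)

theorem topologicalClosure_pran_opBD [CompleteSpace X] {D : X →ₗ.[ℂ] X} {B : X →L[ℂ] X}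
    (hlow : BoundedBelowOn B ((pran D).topologicalClosure : Set X)) :
    (pran (opBD B D)).topologicalClosure =
      (pran D).topologicalClosure.map (B : X →ₗ[ℂ] X) := by
  obtain ⟨K, hK⟩ := hlow.exists_antilipschitzWith_domRestrict
  have : CompleteSpace (pran D).topologicalClosure :=
    (pran D).isClosed_topologicalClosure.completeSpace_coe
  rw [pran_opBD, topologicalClosure_map_eq_of_antilipschitzWith_domRestrict hK]

theorem stmt_7_general [CompleteSpace X] (D : X →ₗ.[ℂ] X) (B : X →L[ℂ] X)
    (hlow : BoundedBelowOn B ((pran D).topologicalClosure : Set X))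
    (hdom : D.domain ≤ pker D ⊔ (pran (opBD B D)).topologicalClosure) :
    pran (opDB B D) = pran D := by
  refine le_antisymm (pran_opDB_le B D) (pran_le_pran_opDB_iff.2 (hdom.trans ?_))
  rw [topologicalClosure_pran_opBD hlow]
  exact sup_le_sup_left LinearMap.map_le_range _

/-- If `B` is bounded below on the closure of `R(D)` and
`X = N(D) ⊕ closure (R(BD))` as a topological direct sum, then `R(DB) = R(D)`. -/
theorem stmt_7 {X : Type*} [NormedAddCommGroup X] [NormedSpace ℂ X] [CompleteSpace X]
    (hrefl : ReflexiveSpace X) (D : X →ₗ.[ℂ] X) (hD : D.IsClosed)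
    (hdense : Dense (D.domain : Set X)) (B : X →L[ℂ] X)
    (hlow : BoundedBelowOn B ((pran D).topologicalClosure : Set X))
    (hsplit : IsTopDirectSum (pker D) (pran (opBD B D)).topologicalClosure) :
    pran (opDB B D) = pran D := by
  exact stmt_7_general D B hlow (hsplit.2.2.2 ▸ le_top)
end
end
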